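/- Consider the family of Fragile CPR games with n players, all with α = 1 and common loss aversion index k > 1, rate of return r and failure probability p satisfying the standing assumptions, in which player i is charged tax rate γ_i t with tax sensitivities γ_1,…,γ_n ∈ [0,1] whose mean is γ_m. Let t ∈ [0, t̄_m), where t̄_m = sup{t ≥ 0 : max_{x ∈ S_{m,t}} [f̂(x) − γ_m t v(x)] > 0}. Then, among all such games with mean sensitivity γ_m, the PNE utilization is smallest in the game Γ_M where every player has sensitivity exactly γ_m; i.e., for any heterogeneous profile (γ_1,…,γ_n) with mean γ_m, the PNE utilization x_H of the heterogeneous game satisfies x_H ≥ x_M, the PNE utilization of Γ_M. This holds for both strictly increasing and strictly decreasing r. -/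

import Mathlib

/-!
For a tax rate `τ` put `F_τ(x) = (r x - τ)(1 - p x) - k(1 + τ) p x = f̂(x) - τ v(x)` (`netRate`).
At an equilibrium with total `X > 0`, every player satisfies `F_{τ_i}(X) + x_i F_{τ_i}'(X) ≤ 0`,
with equality if `x_i > 0`. Since `F_τ(X)` decreases strictly and `F_τ'(X)` weakly in `τ`, players
with a higher tax invest no more than players with a lower one.

Let `H` and `M` be the heterogeneous and homogeneous totals, let `m` be the mean tax and `n` the
number of players. Summing the first-order conditions gives `n F_m(M) + M F_m'(M) ≥ 0`. In the sum
for `H` the terms proportional to `τ_i - m` cancel, and the sum of `x_i (τ_i - m)` is nonpositive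
by Chebyshev's inequality, so that `n F_m(H) + H F_m'(H) ≤ 0`.

These two inequalities exclude `H < M`. The function `G = F_m + K` with `K = k(1 + m)` equals
`(r - m + K)(1 - p)`, a product of positive concave functions, so `G` is log-concave whether `r`
increases or decreases. To the right of the maximum of `F_m`, both `F_m = G - K` and `(log G)'` are
nonincreasing, so from `H` to `M` the ratio `F_m / G = 1 - K / G` does not grow, while
`-x (log G)'` grows strictly. That `H` lies to the right of the maximum is seen from a player taxed
at most at the mean: this player invests at `H`, since otherwise raising the total to `M` would pay.
-/

open Real Set

noncomputable section

/-- Effective rate of return of a player with sensitivity `α` and loss aversion `k`,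
at utilization `x` and tax rate `t`. -/
def effRate (p r : ℝ → ℝ) (α k x t : ℝ) : ℝ :=
  if 0 ≤ r x - t then
    (r x - t) ^ α * (1 - p x) - k * (1 + t) ^ α * p x
  else
    -(k * ((t - r x) ^ α * (1 - p x) + (1 + t) ^ α * p x))

/-- Partial derivative of the effective rate of return in the utilization. -/
def effRateDx (p r : ℝ → ℝ) (α k x t : ℝ) : ℝ :=
  deriv (fun z => effRate p r α k z t) x

/-- `g_i(x,t) = α_i f_i(x,t) / (−f_{i,x}(x,t))`. -/
def gFun (p r : ℝ → ℝ) (α k x t : ℝ) : ℝ :=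
  α * effRate p r α k x t / (-effRateDx p r α k x t)

/-- Standing assumptions on the failure probability `p`. -/
structure FailureProb (p : ℝ → ℝ) : Prop where
  convexOn : ConvexOn ℝ (Ico (0:ℝ) 1) p
  strictMonoOn : StrictMonoOn p (Ico (0:ℝ) 1)
  contDiffOn : ContDiffOn ℝ 1 p (Ico (0:ℝ) 1)
  eq_one : ∀ x : ℝ, 1 ≤ x → p x = 1
  mem_unit : ∀ x : ℝ, p x ∈ Icc (0:ℝ) 1

/-- Standing assumptions on the rate of return `r`. -/
structure RateOfReturn (r : ℝ → ℝ) : Prop where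
  concaveOn : ConcaveOn ℝ (Icc (0:ℝ) 1) r
  pos : ∀ x ∈ Icc (0:ℝ) 1, 0 < r x
  strictMonoOrAnti : StrictMonoOn r (Icc (0:ℝ) 1) ∨ StrictAntiOn r (Icc (0:ℝ) 1)
  contDiffOn : ContDiffOn ℝ 1 r (Icc (0:ℝ) 1)

/-- `S_t`: the set of utilizations `x ∈ [0,1]` with `r(x) − t ≥ 0`. -/
def St (r : ℝ → ℝ) (t : ℝ) : Set ℝ := {x | x ∈ Icc (0:ℝ) 1 ∧ 0 ≤ r x - t}

/-- The maximal tax rate `t̄` of the game. -/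
def tbar {ι : Type*} [Fintype ι] (p r : ℝ → ℝ) (α k : ι → ℝ) : ℝ :=
  sSup {t : ℝ | 0 ≤ t ∧ ∃ i : ι, ∃ x ∈ Icc (0:ℝ) 1, 0 < effRate p r (α i) (k i) x t}

/-- The maximal tax rate `t̄_i` of a single player. -/
def tbarI (p r : ℝ → ℝ) (α k : ℝ) : ℝ :=
  sSup {t : ℝ | 0 ≤ t ∧ ∃ x ∈ St r t, 0 < effRate p r α k x t}

/-- `a_t` for a strictly increasing rate of return. -/
def aT (r : ℝ → ℝ) (t : ℝ) : ℝ :=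
  if t ≤ r 0 then 0 else sInf {x | x ∈ Icc (0:ℝ) 1 ∧ r x = t}

/-- The threshold `y^t_i` for a strictly decreasing rate of return. -/
def yT (p r : ℝ → ℝ) (α k t : ℝ) : ℝ :=
  if effRate p r α k 0 t ≤ 0 then 0
  else sInf {x | x ∈ St r t ∧ effRate p r α k x t = 0}

/-- `ĝ_i(x,t)`, for a strictly decreasing rate of return. -/
def gHat (p r : ℝ → ℝ) (α k x t : ℝ) : ℝ :=
  if x < yT p r α k t then gFun p r α k x t else 0

/-- The function `q_i(x,t)` for strictly increasing rate of return. -/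
def qFun (p r : ℝ → ℝ) (α x t : ℝ) : ℝ :=
  deriv r x * (1 - p x) ^ 2 /
      ((r x + 1) * deriv p x - α * deriv r x * (1 - p x) * p x) *
    ((1 + t) / (r x - t)) ^ (1 - α)

/-- `b` is a best response of a player (parameters `α`, `k`) to the others' total
investment `xbar` at tax rate `t`. -/
def IsBestResponse (p r : ℝ → ℝ) (α k t xbar b : ℝ) : Prop :=
  b ∈ Icc (0:ℝ) 1 ∧
    ∀ y ∈ Icc (0:ℝ) 1,
      y ^ α * effRate p r α k (y + xbar) t ≤ b ^ α * effRate p r α k (b + xbar) t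

/-- Pure Nash equilibrium of the Fragile CPR game at tax rate `t`. -/
def IsPNE {ι : Type*} [Fintype ι] [DecidableEq ι] (p r : ℝ → ℝ) (α k : ι → ℝ)
    (t : ℝ) (x : ι → ℝ) : Prop :=
  (∀ i, x i ∈ Icc (0:ℝ) 1) ∧
    ∀ i, ∀ y ∈ Icc (0:ℝ) 1,
      y ^ α i * effRate p r (α i) (k i) (y + ∑ j ∈ Finset.univ.erase i, x j) t ≤
        x i ^ α i * effRate p r (α i) (k i) (x i + ∑ j ∈ Finset.univ.erase i, x j) t

/-- `y` is the threshold `y^t_i` of a player, as defined in the paper for the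
increasing and decreasing cases of the rate of return. -/
def IsThresholdY (p r : ℝ → ℝ) (α k t y : ℝ) : Prop :=
  (StrictMonoOn r (Icc (0:ℝ) 1) →
    ((∀ x ∈ St r t, effRate p r α k x t ≤ 0) → y = 0) ∧
    ((∃ x ∈ St r t, 0 < effRate p r α k x t) →
      ∃ z ∈ St r t, IsMaxOn (fun x => effRate p r α k x t) (St r t) z ∧
        y ∈ Ioo z 1 ∧ effRate p r α k y t = 0)) ∧
  (StrictAntiOn r (Icc (0:ℝ) 1) →
    ((effRate p r α k 0 t ≤ 0) → y = 0) ∧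
    ((0 < effRate p r α k 0 t) → y ∈ St r t ∧ effRate p r α k y t = 0))

/-- Pure Nash equilibrium under player-specific tax sensitivities `γ_i`
(all players have `α = 1` and common loss aversion `k`). -/
def IsPNEgamma {ι : Type*} [Fintype ι] [DecidableEq ι] (p r : ℝ → ℝ) (k t : ℝ)
    (γ : ι → ℝ) (x : ι → ℝ) : Prop :=
  (∀ i, x i ∈ Icc (0:ℝ) 1) ∧
    ∀ i, ∀ y ∈ Icc (0:ℝ) 1,
      y * effRate p r 1 k (y + ∑ j ∈ Finset.univ.erase i, x j) (γ i * t) ≤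
        x i * effRate p r 1 k (x i + ∑ j ∈ Finset.univ.erase i, x j) (γ i * t)

open scoped Topology

/-- The net rate of return `f̂(x) - τ v(x)`: the branch of `effRate` (with `α = 1`) valid for
`τ ≤ r x`, extended by the same formula to all `x`. -/
def netRate (p r : ℝ → ℝ) (k τ x : ℝ) : ℝ :=
  (r x - τ) * (1 - p x) - k * (1 + τ) * p x

section LogConcave

variable {s : Set ℝ} {f g : ℝ → ℝ} {x y : ℝ}

lemma le_of_logConcave_of_deriv_mul_nonpos (hg : ConcaveOn ℝ s fun z => log (g z))
    (hgx : 0 < g x) (hgy : 0 < g y) (hx : x ∈ s) (hy : y ∈ s) (hd : DifferentiableAt ℝ g x)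
    (h : deriv g x * (y - x) ≤ 0) : g y ≤ g x := by
  have hlog : HasDerivAt (fun z => log (g z)) (deriv g x / g x) x := hd.hasDerivAt.log hgx.ne'
  have hslope : deriv g x / g x * (y - x) ≤ 0 := by
    rw [div_mul_eq_mul_div]
    exact div_nonpos_of_nonpos_of_nonneg h hgx.le
  refine (log_le_log_iff hgy hgx).1 ?_
  rcases lt_trichotomy x y with hxy | rfl | hxy
  · have := hg.slope_le_of_hasDerivAt hx hy hxy hlog
    rw [slope_def_field, div_le_iff₀ (sub_pos.2 hxy)] at this
    linarith
  · exact le_rfl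
  · have := hg.le_slope_of_hasDerivAt hy hx hxy hlog
    rw [slope_def_field, le_div_iff₀ (sub_pos.2 hxy)] at this
    linarith

lemma deriv_div_le_of_logConcave (hg : ConcaveOn ℝ s fun z => log (g z))
    (hgx : g x ≠ 0) (hgy : g y ≠ 0) (hx : x ∈ s) (hy : y ∈ s) (hxy : x < y)
    (hdx : DifferentiableAt ℝ g x) (hdy : DifferentiableAt ℝ g y) :
    deriv g y / g y ≤ deriv g x / g x :=
  (hg.le_slope_of_hasDerivAt hx hy hxy (hdy.hasDerivAt.log hgy)).trans
    (hg.slope_le_of_hasDerivAt hx hy hxy (hdx.hasDerivAt.log hgx))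

lemma mul_add_mul_deriv_neg_of_logConcave {K n : ℝ} (hK : 0 ≤ K) (hn : 0 < n)
    (hf : ConcaveOn ℝ s fun z => log (f z + K)) (hGx : 0 < f x + K)
    (hx : x ∈ s) (hy : y ∈ s) (hxy : x < y)
    (hdx : DifferentiableAt ℝ f x) (hdy : DifferentiableAt ℝ f y)
    (hfy : 0 < f y) (hderiv : deriv f x ≤ 0) (hle : n * f x + x * deriv f x ≤ 0) :
    n * f y + y * deriv f y < 0 := by
  have hGy : 0 < f y + K := add_pos_of_pos_of_nonneg hfy hK
  have hfxy : f y ≤ f x := by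
    have hslope : deriv (fun z => f z + K) x * (y - x) ≤ 0 := by
      rw [deriv_add_const]
      exact mul_nonpos_of_nonpos_of_nonneg hderiv (sub_nonneg.2 hxy.le)
    linarith [le_of_logConcave_of_deriv_mul_nonpos hf hGx hGy hx hy (hdx.add_const K) hslope]
  have hprod : x * deriv f x < 0 := by
    linarith [mul_pos hn (hfy.trans_le hfxy)]
  have hx0 : 0 < x := pos_of_mul_neg_left hprod hderiv
  have hderiv' : deriv f x < 0 := neg_of_mul_neg_right hprod hx0.le
  have hlog : deriv f y / (f y + K) ≤ deriv f x / (f x + K) := by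
    simpa only [deriv_add_const] using
      deriv_div_le_of_logConcave hf hGx.ne' hGy.ne' hx hy hxy (hdx.add_const K) (hdy.add_const K)
  have hratio : f y / (f y + K) ≤ f x / (f x + K) := by
    rw [div_le_div_iff₀ hGy hGx]
    linarith [mul_le_mul_of_nonneg_right hfxy hK]
  have hdiv : (n * f y + y * deriv f y) / (f y + K) < 0 := calc
    (n * f y + y * deriv f y) / (f y + K)
        = n * (f y / (f y + K)) + y * (deriv f y / (f y + K)) := by ring
    _ ≤ n * (f x / (f x + K)) + y * (deriv f x / (f x + K)) := by
        have := hx0.trans hxy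
        gcongr
    _ < n * (f x / (f x + K)) + x * (deriv f x / (f x + K)) := by
        have := mul_lt_mul_of_neg_right hxy (div_neg_of_neg_of_pos hderiv' hGx)
        linarith
    _ = (n * f x + x * deriv f x) / (f x + K) := by ring
    _ ≤ 0 := div_nonpos_of_nonpos_of_nonneg hle hGx.le
  exact neg_of_div_neg_left hdiv hGy.le

end LogConcave

lemma concaveOn_log_of_pos {E : Type*} [AddCommMonoid E] [SMul ℝ E] {s : Set E} {g : E → ℝ}
    (hg : ConcaveOn ℝ s g) (hpos : ∀ z ∈ s, 0 < g z) : ConcaveOn ℝ s fun z => log (g z) := by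
  refine ⟨hg.1, fun x hx y hy a b ha hb hab => ?_⟩
  have hcomb : 0 < a • g x + b • g y := convex_Ioi (0 : ℝ) (hpos x hx) (hpos y hy) ha hb hab
  exact (strictConcaveOn_log_Ioi.concaveOn.2 (hpos x hx) (hpos y hy) ha hb hab).trans
    (log_le_log hcomb (hg.2 hx hy ha hb hab))

lemma sum_mul_sub_nonpos_of_antivary {ι : Type*} [Fintype ι] [Nonempty ι] {f g : ι → ℝ} {c : ℝ}
    (hfg : Antivary f g) (hf : 0 ≤ ∑ i, f i) (hg : ∑ i, g i ≤ Fintype.card ι * c) :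
    ∑ i, f i * (g i - c) ≤ 0 := by
  have hn : (0 : ℝ) < Fintype.card ι := by exact_mod_cast Fintype.card_pos
  have hcard : Fintype.card ι * ∑ i, f i * g i ≤ Fintype.card ι * ((∑ i, f i) * c) := calc
    Fintype.card ι * ∑ i, f i * g i ≤ (∑ i, f i) * ∑ i, g i := hfg.card_mul_sum_le_sum_mul_sum
    _ ≤ (∑ i, f i) * (Fintype.card ι * c) := mul_le_mul_of_nonneg_left hg hf
    _ = Fintype.card ι * ((∑ i, f i) * c) := by ring
  simp only [mul_sub, Finset.sum_sub_distrib, ← Finset.sum_mul]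
  exact sub_nonpos.2 (le_of_mul_le_mul_left hcard hn)

namespace FailureProb

variable {p : ℝ → ℝ} {x : ℝ}

lemma lt_one (hp : FailureProb p) (hx : x ∈ Ico (0 : ℝ) 1) : p x < 1 := by
  obtain ⟨y, hxy, hy⟩ := exists_between hx.2
  exact (hp.strictMonoOn hx ⟨hx.1.trans hxy.le, hy⟩ hxy).trans_le (hp.mem_unit y).2

lemma pos (hp : FailureProb p) (hx : x ∈ Ioo (0 : ℝ) 1) : 0 < p x :=
  (hp.mem_unit 0).1.trans_lt
    (hp.strictMonoOn (left_mem_Ico.2 one_pos) (Ioo_subset_Ico_self hx) hx.1)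

lemma differentiableAt (hp : FailureProb p) (hx : x ∈ Ioo (0 : ℝ) 1) : DifferentiableAt ℝ p x :=
  (hp.contDiffOn.differentiableOn one_ne_zero).differentiableAt (Ico_mem_nhds hx.1 hx.2)

lemma deriv_nonneg (hp : FailureProb p) (hx : x ∈ Ioo (0 : ℝ) 1) : 0 ≤ deriv p x := by
  rw [← derivWithin_of_mem_nhds (Ico_mem_nhds hx.1 hx.2)]
  exact hp.strictMonoOn.monotoneOn.derivWithin_nonneg

end FailureProb

section NetRate

variable {p r : ℝ → ℝ} {k τ x : ℝ}

lemma effRate_eq_netRate (h : τ ≤ r x) : effRate p r 1 k x τ = netRate p r k τ x := by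
  simp [effRate, netRate, h]

lemma effRate_le_netRate (hp : FailureProb p) (hk : 1 ≤ k) :
    effRate p r 1 k x τ ≤ netRate p r k τ x := by
  rcases le_or_gt τ (r x) with h | h
  · exact (effRate_eq_netRate h).le
  · have hloss : 0 ≤ (k - 1) * ((τ - r x) * (1 - p x)) :=
      mul_nonneg (sub_nonneg.2 hk) (mul_nonneg (sub_pos.2 h).le (sub_nonneg.2 (hp.mem_unit x).2))
    simp only [effRate, netRate, rpow_one, sub_nonneg, not_le.2 h, if_false]
    linarith

lemma effRate_neg_of_one_le (hp : FailureProb p) (hk : 1 ≤ k) (hτ : 0 ≤ τ) (hx : 1 ≤ x) :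
    effRate p r 1 k x τ < 0 := by
  refine (effRate_le_netRate hp hk).trans_lt ?_
  have : 0 < k * (1 + τ) := by positivity
  simpa [netRate, hp.eq_one x hx] using this

lemma lt_of_netRate_nonneg (hp : FailureProb p) (hk : 0 < k) (hτ : 0 ≤ τ) (hx : x ∈ Ioo (0 : ℝ) 1)
    (h : 0 ≤ netRate p r k τ x) : τ < r x := by
  have hloss : 0 < k * (1 + τ) * p x := mul_pos (by positivity) (hp.pos hx)
  have hgain : 0 < (r x - τ) * (1 - p x) := by
    unfold netRate at h
    linarith
  exact sub_pos.1 (pos_of_mul_pos_left hgain (sub_nonneg.2 (hp.mem_unit x).2))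

lemma netRate_eq_sub (p r : ℝ → ℝ) (k τ σ x : ℝ) :
    netRate p r k τ x = netRate p r k σ x - (1 + (k - 1) * p x) * (τ - σ) := by
  unfold netRate
  ring

lemma netRate_strictAnti_tax (hp : FailureProb p) (hk : 1 ≤ k) :
    StrictAnti fun τ => netRate p r k τ x := by
  intro σ τ hστ
  have hv : 0 < 1 + (k - 1) * p x :=
    add_pos_of_pos_of_nonneg one_pos (mul_nonneg (sub_nonneg.2 hk) (hp.mem_unit x).1)
  change netRate p r k τ x < netRate p r k σ x
  rw [netRate_eq_sub p r k τ σ]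
  exact sub_lt_self _ (mul_pos hv (sub_pos.2 hστ))

lemma differentiableAt_netRate (hp : FailureProb p) (hr : DifferentiableOn ℝ r (Ioo 0 1))
    (hx : x ∈ Ioo (0 : ℝ) 1) : DifferentiableAt ℝ (netRate p r k τ) x := by
  have hpx := hp.differentiableAt hx
  have hrx := hr.differentiableAt (Ioo_mem_nhds hx.1 hx.2)
  unfold netRate
  fun_prop

lemma deriv_netRate_eq_sub (hp : FailureProb p) (hr : DifferentiableOn ℝ r (Ioo 0 1))
    (hx : x ∈ Ioo (0 : ℝ) 1) (σ : ℝ) :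
    deriv (netRate p r k τ) x =
      deriv (netRate p r k σ) x - (k - 1) * deriv p x * (τ - σ) := by
  have hshift : HasDerivAt (fun z => netRate p r k σ z - (1 + (k - 1) * p z) * (τ - σ))
      (deriv (netRate p r k σ) x - (k - 1) * deriv p x * (τ - σ)) x :=
    (differentiableAt_netRate hp hr hx).hasDerivAt.sub
      ((((hp.differentiableAt hx).hasDerivAt.const_mul (k - 1)).const_add 1).mul_const (τ - σ))
  simpa only [← netRate_eq_sub] using hshift.deriv

lemma deriv_netRate_antitone_tax (hp : FailureProb p) (hr : DifferentiableOn ℝ r (Ioo 0 1))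
    (hk : 1 ≤ k) (hx : x ∈ Ioo (0 : ℝ) 1) : Antitone fun τ => deriv (netRate p r k τ) x := by
  intro σ τ hστ
  change deriv (netRate p r k τ) x ≤ deriv (netRate p r k σ) x
  rw [deriv_netRate_eq_sub hp hr hx σ]
  exact sub_le_self _ (mul_nonneg (mul_nonneg (sub_nonneg.2 hk) (hp.deriv_nonneg hx))
    (sub_nonneg.2 hστ))

lemma netRate_add_eq_mul (p r : ℝ → ℝ) (k τ x : ℝ) :
    netRate p r k τ x + k * (1 + τ) = (r x + (k * (1 + τ) - τ)) * (1 - p x) := by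
  unfold netRate
  ring

lemma return_add_pos (hk : 1 ≤ k) (hτ : 0 ≤ τ) (hrx : 0 ≤ r x) :
    0 < r x + (k * (1 + τ) - τ) := by
  linarith [mul_le_mul_of_nonneg_right hk (by linarith : 0 ≤ 1 + τ)]

lemma netRate_add_pos (hp : FailureProb p) (hk : 1 ≤ k) (hτ : 0 ≤ τ) (hx : x ∈ Ico (0 : ℝ) 1)
    (hrx : 0 ≤ r x) : 0 < netRate p r k τ x + k * (1 + τ) := by
  rw [netRate_add_eq_mul]
  exact mul_pos (return_add_pos hk hτ hrx) (sub_pos.2 (hp.lt_one hx))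

lemma concaveOn_log_netRate_add (hp : FailureProb p) (hr : ConcaveOn ℝ (Icc 0 1) r)
    (hk : 1 ≤ k) (hτ : 0 ≤ τ) :
    ConcaveOn ℝ {x ∈ Ico (0 : ℝ) 1 | 0 ≤ r x}
      fun x => log (netRate p r k τ x + k * (1 + τ)) := by
  have hr' : ConcaveOn ℝ (Ico 0 1) r := hr.subset Ico_subset_Icc_self (convex_Ico 0 1)
  have hconv : Convex ℝ {x ∈ Ico (0 : ℝ) 1 | 0 ≤ r x} := hr'.convex_ge 0
  have hreturn : ∀ x ∈ {x ∈ Ico (0 : ℝ) 1 | 0 ≤ r x}, 0 < r x + (k * (1 + τ) - τ) :=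
    fun x hx => return_add_pos hk hτ hx.2
  have hsurvival : ∀ x ∈ {x ∈ Ico (0 : ℝ) 1 | 0 ≤ r x}, 0 < 1 - p x :=
    fun x hx => sub_pos.2 (hp.lt_one hx.1)
  have hlog_return :=
    concaveOn_log_of_pos ((hr'.subset (sep_subset _ _) hconv).add_const _) hreturn
  have hlog_survival := concaveOn_log_of_pos
    ((concaveOn_const (1 : ℝ) hconv).sub (hp.convexOn.subset (sep_subset _ _) hconv)) hsurvival
  refine (hlog_return.add hlog_survival).congr fun x hx => ?_
  change log (r x + (k * (1 + τ) - τ)) + log (1 - p x) = log (netRate p r k τ x + k * (1 + τ))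
  rw [netRate_add_eq_mul, log_mul (hreturn x hx).ne' (hsurvival x hx).ne']

lemma exists_effRate_pos_of_lt_sSup {γ t : ℝ} (hp : FailureProb p) (hk : 1 ≤ k) (hγ : 0 ≤ γ)
    (ht : 0 ≤ t)
    (h : t < sSup {s : ℝ | 0 ≤ s ∧ ∃ x ∈ St r (γ * s), 0 < effRate p r 1 k x (γ * s)}) :
    ∃ x ∈ St r (γ * t), 0 < effRate p r 1 k x (γ * t) := by
  have hne : {s : ℝ | 0 ≤ s ∧
      ∃ x ∈ St r (γ * s), 0 < effRate p r 1 k x (γ * s)}.Nonempty := by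
    by_contra! hempty
    rw [hempty, Real.sSup_empty] at h
    exact ht.not_gt h
  obtain ⟨s, ⟨-, x, ⟨hx, hrx⟩, hpos⟩, hts⟩ := exists_lt_of_lt_csSup hne h
  have htax : γ * t ≤ γ * s := mul_le_mul_of_nonneg_left hts.le hγ
  have hrx' : γ * s ≤ r x := sub_nonneg.1 hrx
  refine ⟨x, ⟨hx, sub_nonneg.2 (htax.trans hrx')⟩, ?_⟩
  rw [effRate_eq_netRate hrx'] at hpos
  rw [effRate_eq_netRate (htax.trans hrx')]
  exact hpos.trans_le ((netRate_strictAnti_tax hp hk).antitone htax)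

end NetRate

namespace IsBestResponse

variable {p r : ℝ → ℝ} {k τ b c : ℝ}

lemma mul_effRate_le (h : IsBestResponse p r 1 k τ c b) {y : ℝ} (hy : y ∈ Icc (0 : ℝ) 1) :
    y * effRate p r 1 k (y + c) τ ≤ b * effRate p r 1 k (b + c) τ := by
  simpa only [rpow_one] using h.2 y hy

lemma effRate_nonneg (h : IsBestResponse p r 1 k τ c b) (hb : 0 < b) :
    0 ≤ effRate p r 1 k (b + c) τ := by
  have := h.mul_effRate_le (left_mem_Icc.2 zero_le_one)
  rw [zero_mul] at this
  exact nonneg_of_mul_nonneg_right this hb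

lemma isLocalMaxOn (h : IsBestResponse p r 1 k τ c b) (hr : ContinuousAt r (b + c))
    (hτ : τ < r (b + c)) :
    IsLocalMaxOn (fun y => y * netRate p r k τ (y + c)) (Icc 0 1) b := by
  have hcont : ContinuousAt (fun y => r (y + c)) b :=
    ContinuousAt.comp (f := fun y => y + c) hr (by fun_prop)
  filter_upwards [self_mem_nhdsWithin,
    nhdsWithin_le_nhds (hcont.eventually (lt_mem_nhds hτ))] with y hy hry
  simpa only [effRate_eq_netRate hry.le, effRate_eq_netRate hτ.le] using h.mul_effRate_le hy

lemma netRate_add_mul_deriv_eq_zero (h : IsBestResponse p r 1 k τ c b) (hp : FailureProb p)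
    (hr : DifferentiableOn ℝ r (Ioo 0 1)) (hk : 1 ≤ k) (hτ : 0 ≤ τ) (hb : 0 < b) (hc : 0 ≤ c)
    (hbc : b + c < 1) :
    netRate p r k τ (b + c) + b * deriv (netRate p r k τ) (b + c) = 0 := by
  have hX : b + c ∈ Ioo (0 : ℝ) 1 := ⟨by linarith, hbc⟩
  have hτr : τ < r (b + c) := lt_of_netRate_nonneg hp (by linarith) hτ hX
    ((h.effRate_nonneg hb).trans (effRate_le_netRate hp hk))
  have hmax : IsLocalMax (fun y => y * netRate p r k τ (y + c)) b :=
    (h.isLocalMaxOn (hr.differentiableAt (Ioo_mem_nhds hX.1 hX.2)).continuousAt hτr).isLocalMax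
      (Icc_mem_nhds hb (by linarith))
  have hderiv := (hasDerivAt_id b).mul
    ((differentiableAt_netRate (k := k) (τ := τ) hp hr hX).hasDerivAt.comp_add_const b c)
  simpa using hmax.hasDerivAt_eq_zero hderiv

lemma netRate_nonpos (h : IsBestResponse p r 1 k τ c 0) (hp : FailureProb p)
    (hr : DifferentiableOn ℝ r (Ioo 0 1)) (hk : 0 < k) (hτ : 0 ≤ τ) (hc : c ∈ Ioo (0 : ℝ) 1) :
    netRate p r k τ c ≤ 0 := by
  by_contra! hpos
  have hcont : ContinuousAt (fun y => netRate p r k τ (y + c)) 0 :=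
    ContinuousAt.comp_of_eq (f := fun y => y + c)
      (differentiableAt_netRate hp hr hc).continuousAt (by fun_prop) (zero_add c)
  have hrate : ∀ᶠ y in 𝓝[>] (0 : ℝ), 0 < netRate p r k τ (y + c) :=
    nhdsWithin_le_nhds (hcont.eventually (lt_mem_nhds (by simpa only [zero_add] using hpos)))
  obtain ⟨y, hy, hy0, hyc⟩ := (hrate.and (Ioo_mem_nhdsGT (sub_pos.2 hc.2))).exists
  have hτr : τ < r (y + c) :=
    lt_of_netRate_nonneg hp hk hτ ⟨add_pos hy0 hc.1, lt_sub_iff_add_lt.1 hyc⟩ hy.le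
  have hgain := h.mul_effRate_le (y := y) ⟨hy0.le, by linarith [hc.1]⟩
  rw [zero_mul, effRate_eq_netRate hτr.le] at hgain
  exact hgain.not_gt (mul_pos hy0 hy)

end IsBestResponse

namespace IsPNEgamma

variable {ι : Type*} [Fintype ι] [DecidableEq ι] {p r : ℝ → ℝ} {k t : ℝ} {γ x : ι → ℝ}

lemma isBestResponse (h : IsPNEgamma p r k t γ x) (i : ι) :
    IsBestResponse p r 1 k (γ i * t) (∑ j ∈ Finset.univ.erase i, x j) (x i) :=
  ⟨h.1 i, by simpa only [rpow_one] using h.2 i⟩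

lemma sum_nonneg (h : IsPNEgamma p r k t γ x) : 0 ≤ ∑ i, x i :=
  Finset.sum_nonneg fun i _ => (h.1 i).1

lemma sum_pos_iff (h : IsPNEgamma p r k t γ x) : 0 < ∑ i, x i ↔ ∃ i, 0 < x i := by
  simpa using Finset.sum_pos_iff_of_nonneg (s := Finset.univ) fun i _ => (h.1 i).1

lemma effRate_nonneg (h : IsPNEgamma p r k t γ x) {i : ι} (hi : 0 < x i) :
    0 ≤ effRate p r 1 k (∑ j, x j) (γ i * t) := by
  simpa only [Finset.add_sum_erase _ x (Finset.mem_univ i)] using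
    (h.isBestResponse i).effRate_nonneg hi

lemma netRate_nonneg (h : IsPNEgamma p r k t γ x) (hp : FailureProb p) (hk : 1 ≤ k)
    {i : ι} (hi : 0 < x i) : 0 ≤ netRate p r k (γ i * t) (∑ j, x j) :=
  (h.effRate_nonneg hi).trans (effRate_le_netRate hp hk)

lemma sum_lt_one (h : IsPNEgamma p r k t γ x) (hp : FailureProb p) (hk : 1 ≤ k)
    (hτ : ∀ i, 0 ≤ γ i * t) : ∑ i, x i < 1 := by
  by_contra! hone
  obtain ⟨i, hi⟩ := h.sum_pos_iff.1 (zero_lt_one.trans_le hone)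
  exact (h.effRate_nonneg hi).not_gt (effRate_neg_of_one_le hp hk (hτ i) hone)

lemma sum_mem_Ioo (h : IsPNEgamma p r k t γ x) (hp : FailureProb p) (hk : 1 ≤ k)
    (hτ : ∀ i, 0 ≤ γ i * t) {i : ι} (hi : 0 < x i) : ∑ j, x j ∈ Ioo (0 : ℝ) 1 :=
  ⟨h.sum_pos_iff.2 ⟨i, hi⟩, h.sum_lt_one hp hk hτ⟩

lemma tax_lt_return (h : IsPNEgamma p r k t γ x) (hp : FailureProb p) (hk : 1 ≤ k)
    (hτ : ∀ i, 0 ≤ γ i * t) {i : ι} (hi : 0 < x i) : γ i * t < r (∑ j, x j) :=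
  lt_of_netRate_nonneg hp (by linarith) (hτ i) (h.sum_mem_Ioo hp hk hτ hi)
    (h.netRate_nonneg hp hk hi)

lemma netRate_add_mul_deriv_eq_zero (h : IsPNEgamma p r k t γ x) (hp : FailureProb p)
    (hr : DifferentiableOn ℝ r (Ioo 0 1)) (hk : 1 ≤ k) (hτ : ∀ i, 0 ≤ γ i * t)
    {i : ι} (hi : 0 < x i) :
    netRate p r k (γ i * t) (∑ j, x j) +
      x i * deriv (netRate p r k (γ i * t)) (∑ j, x j) = 0 := by
  have hsum := Finset.add_sum_erase _ x (Finset.mem_univ i)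
  simpa only [hsum] using (h.isBestResponse i).netRate_add_mul_deriv_eq_zero hp hr hk (hτ i) hi
    (Finset.sum_nonneg fun j _ => (h.1 j).1) (hsum.trans_lt (h.sum_lt_one hp hk hτ))

lemma deriv_netRate_nonpos (h : IsPNEgamma p r k t γ x) (hp : FailureProb p)
    (hr : DifferentiableOn ℝ r (Ioo 0 1)) (hk : 1 ≤ k) (hτ : ∀ i, 0 ≤ γ i * t)
    {i : ι} (hi : 0 < x i) : deriv (netRate p r k (γ i * t)) (∑ j, x j) ≤ 0 := by
  refine nonpos_of_mul_nonpos_right ?_ hi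
  linarith [h.netRate_nonneg hp hk hi, h.netRate_add_mul_deriv_eq_zero hp hr hk hτ hi]

lemma netRate_add_mul_deriv_nonpos (h : IsPNEgamma p r k t γ x) (hp : FailureProb p)
    (hr : DifferentiableOn ℝ r (Ioo 0 1)) (hk : 1 ≤ k) (hτ : ∀ i, 0 ≤ γ i * t)
    (hx : 0 < ∑ i, x i) (i : ι) :
    netRate p r k (γ i * t) (∑ j, x j) +
      x i * deriv (netRate p r k (γ i * t)) (∑ j, x j) ≤ 0 := by
  rcases (h.1 i).1.eq_or_lt' with hi | hi
  · have hbest := h.isBestResponse i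
    rw [Finset.sum_erase _ hi, hi] at hbest
    rw [hi, zero_mul, add_zero]
    exact hbest.netRate_nonpos hp hr (by linarith) (hτ i) ⟨hx, h.sum_lt_one hp hk hτ⟩
  · exact (h.netRate_add_mul_deriv_eq_zero hp hr hk hτ hi).le

lemma antivary_tax (h : IsPNEgamma p r k t γ x) (hp : FailureProb p)
    (hr : DifferentiableOn ℝ r (Ioo 0 1)) (hk : 1 ≤ k) (hτ : ∀ i, 0 ≤ γ i * t) :
    Antivary x fun i => γ i * t := by
  intro i j hij
  by_contra! hlt
  have hj : 0 < x j := (h.1 i).1.trans_lt hlt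
  have hX := h.sum_mem_Ioo hp hk hτ hj
  have hrate : netRate p r k (γ j * t) (∑ l, x l) < netRate p r k (γ i * t) (∑ l, x l) :=
    netRate_strictAnti_tax hp hk hij
  have hderiv : deriv (netRate p r k (γ j * t)) (∑ l, x l) ≤
      deriv (netRate p r k (γ i * t)) (∑ l, x l) :=
    deriv_netRate_antitone_tax hp hr hk hX hij.le
  have hneg : netRate p r k (γ j * t) (∑ l, x l) +
      x j * deriv (netRate p r k (γ j * t)) (∑ l, x l) < 0 := calc
    _ ≤ netRate p r k (γ j * t) (∑ l, x l) +
          x i * deriv (netRate p r k (γ j * t)) (∑ l, x l) := by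
        linarith [mul_le_mul_of_nonpos_right hlt.le (h.deriv_netRate_nonpos hp hr hk hτ hj)]
    _ < netRate p r k (γ i * t) (∑ l, x l) +
          x i * deriv (netRate p r k (γ i * t)) (∑ l, x l) :=
        add_lt_add_of_lt_of_le hrate (mul_le_mul_of_nonneg_left hderiv (h.1 i).1)
    _ ≤ 0 := h.netRate_add_mul_deriv_nonpos hp hr hk hτ hX.1 i
  exact hneg.ne (h.netRate_add_mul_deriv_eq_zero hp hr hk hτ hj)

lemma card_mul_netRate_add_nonpos [Nonempty ι] (h : IsPNEgamma p r k t γ x) (hp : FailureProb p)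
    (hr : DifferentiableOn ℝ r (Ioo 0 1)) (hk : 1 ≤ k) (hτ : ∀ i, 0 ≤ γ i * t)
    (hx : 0 < ∑ i, x i) {σ : ℝ} (hσ : ∑ i, γ i * t ≤ Fintype.card ι * σ) :
    Fintype.card ι * netRate p r k σ (∑ i, x i) +
      (∑ i, x i) * deriv (netRate p r k σ) (∑ i, x i) ≤ 0 := by
  have hX : ∑ i, x i ∈ Ioo (0 : ℝ) 1 := ⟨hx, h.sum_lt_one hp hk hτ⟩
  have hfoc := Finset.sum_nonpos fun i (_ : i ∈ Finset.univ) =>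
    h.netRate_add_mul_deriv_nonpos hp hr hk hτ hx i
  have hcheb := sum_mul_sub_nonpos_of_antivary (h.antivary_tax hp hr hk hτ) hx.le hσ
  generalize hXdef : ∑ i, x i = X at *
  have hdev : ∑ i, (γ i * t - σ) ≤ 0 := by
    simpa [Finset.sum_sub_distrib] using hσ
  have hv : 0 ≤ 1 + (k - 1) * p X :=
    add_nonneg zero_le_one (mul_nonneg (sub_nonneg.2 hk) (hp.mem_unit X).1)
  have hc : 0 ≤ (k - 1) * deriv p X := mul_nonneg (sub_nonneg.2 hk) (hp.deriv_nonneg hX)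
  have hexpand : ∑ i, (netRate p r k (γ i * t) X + x i * deriv (netRate p r k (γ i * t)) X) =
      Fintype.card ι * netRate p r k σ X + X * deriv (netRate p r k σ) X
        - (1 + (k - 1) * p X) * ∑ i, (γ i * t - σ)
        - (k - 1) * deriv p X * ∑ i, x i * (γ i * t - σ) := by
    have hterm : ∀ i, netRate p r k (γ i * t) X + x i * deriv (netRate p r k (γ i * t)) X =
        netRate p r k σ X + x i * deriv (netRate p r k σ) X
          - (1 + (k - 1) * p X) * (γ i * t - σ)
          - (k - 1) * deriv p X * (x i * (γ i * t - σ)) := fun i => by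
      rw [netRate_eq_sub p r k (γ i * t) σ, deriv_netRate_eq_sub hp hr hX σ]
      ring
    rw [Finset.sum_congr rfl fun i _ => hterm i, Finset.sum_sub_distrib, Finset.sum_sub_distrib,
      Finset.sum_add_distrib, ← Finset.mul_sum, ← Finset.mul_sum, ← Finset.sum_mul, hXdef,
      Finset.sum_const, Finset.card_univ, nsmul_eq_mul]
  linarith [mul_nonpos_of_nonneg_of_nonpos hv hdev, mul_nonpos_of_nonneg_of_nonpos hc hcheb]

lemma pos_of_netRate_pos (h : IsPNEgamma p r k t γ x) (hp : FailureProb p) (hk : 0 < k) {i : ι}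
    (hτ : 0 ≤ γ i * t) {y : ℝ} (hxy : ∑ j, x j < y) (hy : y < 1)
    (hpos : 0 < netRate p r k (γ i * t) y) : 0 < x i := by
  refine (h.1 i).1.lt_of_ne' fun hi => ?_
  have hX := h.sum_nonneg
  have hbest := (h.isBestResponse i).mul_effRate_le (y := y - ∑ j, x j)
    ⟨by linarith, by linarith⟩
  rw [Finset.sum_erase _ hi, hi, zero_mul, sub_add_cancel, effRate_eq_netRate
    (lt_of_netRate_nonneg hp hk hτ ⟨hX.trans_lt hxy, hy⟩ hpos.le).le] at hbest
  exact hbest.not_gt (mul_pos (sub_pos.2 hxy) hpos)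

section Homogeneous

variable {γm : ℝ}

lemma card_mul_netRate_add_nonneg (h : IsPNEgamma p r k t (fun _ => γm) x) (hp : FailureProb p)
    (hr : DifferentiableOn ℝ r (Ioo 0 1)) (hk : 1 ≤ k) (hτ : 0 ≤ γm * t) (hx : 0 < ∑ i, x i) :
    0 ≤ Fintype.card ι * netRate p r k (γm * t) (∑ i, x i) +
      (∑ i, x i) * deriv (netRate p r k (γm * t)) (∑ i, x i) := by
  obtain ⟨j, hj⟩ := h.sum_pos_iff.1 hx
  have hfoc : ∀ i, 0 ≤ netRate p r k (γm * t) (∑ l, x l) +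
      x i * deriv (netRate p r k (γm * t)) (∑ l, x l) := fun i => by
    rcases (h.1 i).1.eq_or_lt' with hi | hi
    · simpa only [hi, zero_mul, add_zero] using h.netRate_nonneg hp hk hj
    · exact (h.netRate_add_mul_deriv_eq_zero hp hr hk (fun _ => hτ) hi).ge
  simpa only [Finset.sum_add_distrib, ← Finset.sum_mul, Finset.sum_const, Finset.card_univ,
    nsmul_eq_mul] using Finset.sum_nonneg fun i (_ : i ∈ Finset.univ) => hfoc i

lemma netRate_pos (h : IsPNEgamma p r k t (fun _ => γm) x) (hp : FailureProb p)
    (hrc : ConcaveOn ℝ (Icc 0 1) r) (hrd : DifferentiableOn ℝ r (Ioo 0 1)) (hk : 1 ≤ k)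
    (hτ : 0 ≤ γm * t) (hx : 0 < ∑ i, x i)
    (hz : ∃ z ∈ St r (γm * t), 0 < effRate p r 1 k z (γm * t)) :
    0 < netRate p r k (γm * t) (∑ i, x i) := by
  obtain ⟨z, ⟨⟨hz0, -⟩, hrz⟩, hzpos⟩ := hz
  have hzI : z ∈ Ico (0 : ℝ) 1 :=
    ⟨hz0, lt_of_not_ge fun hone => hzpos.not_gt (effRate_neg_of_one_le hp hk hτ hone)⟩
  have hrz0 : 0 ≤ r z := hτ.trans (sub_nonneg.1 hrz)
  obtain ⟨i, hi⟩ := h.sum_pos_iff.1 hx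
  have hX := h.sum_mem_Ioo hp hk (fun _ => hτ) hi
  have hX' := Ioo_subset_Ico_self hX
  have hrX0 : 0 ≤ r (∑ j, x j) := hτ.trans (h.tax_lt_return hp hk (fun _ => hτ) hi).le
  refine (h.netRate_nonneg hp hk hi).lt_of_ne' fun hzero => ?_
  -- A vanishing net rate would make the total a critical point, hence a global maximum.
  have hcrit : deriv (netRate p r k (γm * t)) (∑ j, x j) = 0 := by
    have hfoc := h.netRate_add_mul_deriv_eq_zero hp hrd hk (fun _ => hτ) hi
    rw [hzero, zero_add] at hfoc
    exact (mul_eq_zero.1 hfoc).resolve_left hi.ne'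
  have hmax := le_of_logConcave_of_deriv_mul_nonpos (concaveOn_log_netRate_add hp hrc hk hτ)
    (netRate_add_pos hp hk hτ hX' hrX0) (netRate_add_pos hp hk hτ hzI hrz0)
    ⟨hX', hrX0⟩ ⟨hzI, hrz0⟩ ((differentiableAt_netRate hp hrd hX).add_const _)
    (by rw [deriv_add_const, hcrit, zero_mul])
  rw [effRate_eq_netRate (sub_nonneg.1 hrz)] at hzpos
  linarith

end Homogeneous

end IsPNEgamma

theorem statement19_general {ι : Type*} [Fintype ι] [DecidableEq ι] [Nonempty ι]
    {p r : ℝ → ℝ} (hp : FailureProb p) (hrc : ConcaveOn ℝ (Icc 0 1) r)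
    (hrd : DifferentiableOn ℝ r (Ioo 0 1)) {k : ℝ} (hk : 1 ≤ k) {γ : ι → ℝ} (hγ : ∀ i, 0 ≤ γ i)
    {γm : ℝ} (hγm : (∑ i, γ i) / Fintype.card ι ≤ γm) {t : ℝ} (ht : 0 ≤ t)
    (hz : ∃ z ∈ St r (γm * t), 0 < effRate p r 1 k z (γm * t)) {xH xM : ι → ℝ}
    (hH : IsPNEgamma p r k t γ xH) (hM : IsPNEgamma p r k t (fun _ => γm) xM) :
    ∑ i, xM i ≤ ∑ i, xH i := by
  by_contra! hlt
  have hn : (0 : ℝ) < Fintype.card ι := by exact_mod_cast Fintype.card_pos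
  have hsum : ∑ i, γ i ≤ Fintype.card ι * γm := (div_le_iff₀' hn).1 hγm
  have hτ : ∀ i, 0 ≤ γ i * t := fun i => mul_nonneg (hγ i) ht
  have hτm : 0 ≤ γm * t :=
    mul_nonneg ((div_nonneg (Finset.sum_nonneg fun i _ => hγ i) hn.le).trans hγm) ht
  have hM0 : 0 < ∑ i, xM i := hH.sum_nonneg.trans_lt hlt
  have hMI : ∑ i, xM i ∈ Ioo (0 : ℝ) 1 := ⟨hM0, hM.sum_lt_one hp hk fun _ => hτm⟩
  have hFM := hM.netRate_pos hp hrc hrd hk hτm hM0 hz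
  have hrM : 0 ≤ r (∑ i, xM i) :=
    hτm.trans (lt_of_netRate_nonneg hp (by linarith) hτm hMI hFM.le).le
  obtain ⟨i, -, hi⟩ : ∃ i ∈ Finset.univ, γ i ≤ γm :=
    Finset.exists_le_of_sum_le Finset.univ_nonempty (by simpa using hsum)
  have hτi : γ i * t ≤ γm * t := mul_le_mul_of_nonneg_right hi ht
  have hxi : 0 < xH i := hH.pos_of_netRate_pos hp (by linarith) (hτ i) hlt hMI.2
    (hFM.trans_le ((netRate_strictAnti_tax hp hk).antitone hτi))
  have hHI := hH.sum_mem_Ioo hp hk hτ hxi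
  have hHI' := Ioo_subset_Ico_self hHI
  have hrH : 0 ≤ r (∑ j, xH j) := (hτ i).trans (hH.tax_lt_return hp hk hτ hxi).le
  have hderiv : deriv (netRate p r k (γm * t)) (∑ j, xH j) ≤ 0 :=
    (deriv_netRate_antitone_tax hp hrd hk hHI hτi).trans (hH.deriv_netRate_nonpos hp hrd hk hτ hxi)
  have hτsum : ∑ j, γ j * t ≤ Fintype.card ι * (γm * t) := by
    rw [← Finset.sum_mul, ← mul_assoc]
    exact mul_le_mul_of_nonneg_right hsum ht
  have hfocH := hH.card_mul_netRate_add_nonpos hp hrd hk hτ hHI.1 hτsum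
  have hfocM := hM.card_mul_netRate_add_nonneg hp hrd hk hτm hM0
  exact hfocM.not_gt (mul_add_mul_deriv_neg_of_logConcave (by positivity) hn
    (concaveOn_log_netRate_add hp hrc hk hτm) (netRate_add_pos hp hk hτm hHI' hrH)
    ⟨hHI', hrH⟩ ⟨Ioo_subset_Ico_self hMI, hrM⟩ hlt (differentiableAt_netRate hp hrd hHI)
    (differentiableAt_netRate hp hrd hMI) hFM hderiv hfocH)

/-- with `α = 1` and common loss aversion `k > 1`, among all
assignments of tax sensitivities `γ_i ∈ [0,1]` with mean `γ_m`, the PNE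
utilization is smallest when every player has sensitivity exactly `γ_m`:
the heterogeneous PNE utilization `x_H` satisfies `x_H ≥ x_M`. -/
theorem statement19 {ι : Type*} [Fintype ι] [DecidableEq ι] [Nonempty ι]
    (p r : ℝ → ℝ)
    (hp : FailureProb p) (hr : RateOfReturn r)
    (k : ℝ) (hk : 1 < k)
    (γ : ι → ℝ) (hγ : ∀ i, γ i ∈ Icc (0:ℝ) 1)
    (γm : ℝ) (hγm : γm = (∑ i, γ i) / (Fintype.card ι : ℝ))
    (t : ℝ) (ht : 0 ≤ t)
    (ht' : t < sSup {s : ℝ | 0 ≤ s ∧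
      ∃ x ∈ St r (γm * s), 0 < effRate p r 1 k x (γm * s)})
    (xH xM : ι → ℝ)
    (hH : IsPNEgamma p r k t γ xH)
    (hM : IsPNEgamma p r k t (fun _ => γm) xM) :
    ∑ i, xM i ≤ ∑ i, xH i := by
  have hm : 0 ≤ γm := hγm ▸ div_nonneg (Finset.sum_nonneg fun i _ => (hγ i).1) (Nat.cast_nonneg _)
  exact statement19_general hp hr.concaveOn
    ((hr.contDiffOn.differentiableOn one_ne_zero).mono Ioo_subset_Icc_self) hk.le
    (fun i => (hγ i).1) hγm.ge ht (exists_effRate_pos_of_lt_sSup hp hk.le hm ht ht') hH hM
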